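/- For r ≥ 4, the number of reduced words of the permutation σ = (2, 3, ..., r-3, r, r-2, r-1, 1) ∈ S_r equals C(r, 2) = binom(ℓ(σ)-1, 2), where ℓ(σ) = r+1 is the length of σ. -/

import Mathlib

/-!
Words are stripped from the left: a word of length `n + 1` for `w` is a letter `i` followed by a
word of length `n` for `s i * w`.  In terms of `u = w⁻¹` this replaces `u` by `u * s i`, which
swaps the entries at positions `i` and `i + 1` of the one-line notation of `u`.  The inversion
number changes by exactly one at each step (`inv_mul_s`), so a word of length `inv u` must begin
with a descent of `u` (`count_eq_zero`), and the number of reduced words obeys a recursion over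
descents (`Reach.step_one`, `Reach.step_two`).

With `r = k + 4`, only three families of one-line notations arise, indexed by `j ≤ k`
(up to a few small cases at `j = k`):

* `cyc j`, the inverse of the cycle `s_j ⋯ s_{k+2}`, whose only descent is `j`: one reduced word;
* `cycB j`, with descents `j` and `k + 1` leading to `cycB (j + 1)` and `cyc j`: hence
  `k - j + 3` reduced words;
* `cycD j`, with descents `j` and `k + 2` leading to `cycD (j + 1)` and `cycB j`: hence
  `C(k - j + 4, 2)` reduced words.

The inverse of `σ` is `cycD 0`.
-/

namespace ReducedWords

/-! ### Inversions and adjacent transpositions -/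

/-- The adjacent transposition exchanging `i` and `i + 1`. -/
def s {m : ℕ} (i : Fin m) : Equiv.Perm (Fin (m + 1)) := Equiv.swap i.castSucc i.succ

/-- The pairs of positions at which `u` has an inversion. -/
def invSet {m : ℕ} (u : Equiv.Perm (Fin (m + 1))) : Finset (Fin (m + 1) × Fin (m + 1)) :=
  Finset.univ.filter fun p => p.1 < p.2 ∧ u p.2 < u p.1

lemma mem_invSet {m : ℕ} (u : Equiv.Perm (Fin (m + 1))) (x y : Fin (m + 1)) :
    (x, y) ∈ invSet u ↔ x < y ∧ u y < u x := by
  rw [invSet, Finset.mem_filter]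
  simp

/-- The inversion number. -/
def inv {m : ℕ} (u : Equiv.Perm (Fin (m + 1))) : ℕ := (invSet u).card

/-- The number of words of length `n` in the adjacent transpositions with product `u⁻¹`,
defined by recursion on the first letter; see `ncard_words`. -/
def count {m : ℕ} : ℕ → Equiv.Perm (Fin (m + 1)) → ℕ
  | 0, u => if u = 1 then 1 else 0
  | n + 1, u => ∑ i : Fin m, count n (u * s i)

lemma s_mul_s {m : ℕ} (i : Fin m) : s i * s i = 1 := Equiv.swap_mul_self _ _

lemma mul_s_mul_s {m : ℕ} (u : Equiv.Perm (Fin (m + 1))) (i : Fin m) : u * s i * s i = u := by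
  rw [mul_assoc, s_mul_s, mul_one]

lemma s_s {m : ℕ} (i : Fin m) (x : Fin (m + 1)) : s i (s i x) = x := Equiv.swap_apply_self _ _ _

/-- An adjacent transposition reverses the order of no pair other than the one it exchanges. -/
lemma s_lt_s {m : ℕ} (i : Fin m) {x y : Fin (m + 1)} (h : x < y)
    (hne : (x, y) ≠ (i.castSucc, i.succ)) : s i x < s i y := by
  rw [Ne, Prod.mk.injEq] at hne
  unfold s
  rw [Equiv.swap_apply_def, Equiv.swap_apply_def]
  simp only [Fin.ext_iff, Fin.lt_def, Fin.val_castSucc, Fin.val_succ] at h hne ⊢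
  split_ifs <;> (try simp only [Fin.val_castSucc, Fin.val_succ]) <;> omega

lemma inv_mul_s {m : ℕ} (u : Equiv.Perm (Fin (m + 1))) (i : Fin m)
    (h : u i.castSucc < u i.succ) : inv (u * s i) = inv u + 1 := by
  have hcs : s i i.castSucc = i.succ := Equiv.swap_apply_left _ _
  have hsc : s i i.succ = i.castSucc := Equiv.swap_apply_right _ _
  have hmem : (i.castSucc, i.succ) ∈ invSet (u * s i) := by
    rw [mem_invSet]
    simp [hcs, hsc, h]
  have hcard : ((invSet (u * s i)).erase (i.castSucc, i.succ)).card = (invSet u).card := by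
    refine Finset.card_nbij' (fun p => (s i p.1, s i p.2)) (fun p => (s i p.1, s i p.2))
      ?_ ?_ ?_ ?_
    · rintro ⟨x, y⟩ hp
      simp only [Finset.mem_coe, Finset.mem_erase, mem_invSet, Equiv.Perm.mul_apply] at hp ⊢
      exact ⟨s_lt_s i hp.2.1 hp.1, hp.2.2⟩
    · rintro ⟨x, y⟩ hp
      simp only [Finset.mem_coe, Finset.mem_erase, mem_invSet, Equiv.Perm.mul_apply, s_s] at hp ⊢
      have hne : (x, y) ≠ (i.castSucc, i.succ) := by
        rintro ⟨rfl, rfl⟩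
        exact absurd hp.2 h.asymm
      refine ⟨?_, s_lt_s i hp.1 hne, hp.2⟩
      intro he
      obtain ⟨h1, h2⟩ := Prod.mk.inj he
      have e1 : x = i.succ := by rw [← s_s i x, h1, hcs]
      have e2 : y = i.castSucc := by rw [← s_s i y, h2, hsc]
      have := hp.1
      rw [e1, e2, Fin.lt_def, Fin.val_castSucc, Fin.val_succ] at this
      omega
    · rintro ⟨x, y⟩ _
      simp [s_s]
    · rintro ⟨x, y⟩ _
      simp [s_s]
  rw [inv, inv, ← hcard, Finset.card_erase_add_one hmem]

lemma inv_of_descent {m : ℕ} (u : Equiv.Perm (Fin (m + 1))) (i : Fin m)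
    (h : u i.succ < u i.castSucc) : inv u = inv (u * s i) + 1 := by
  have := inv_mul_s (u * s i) i (by simpa [s] using h)
  rwa [mul_s_mul_s] at this

lemma inv_one {m : ℕ} : inv (1 : Equiv.Perm (Fin (m + 1))) = 0 := by
  rw [inv, Finset.card_eq_zero, invSet, Finset.filter_eq_empty_iff]
  rintro ⟨x, y⟩ _ ⟨h1, h2⟩
  exact absurd h2 h1.asymm

/-! ### Counting words -/

/-- No word is shorter than the inversion number. -/
lemma count_eq_zero {m : ℕ} (n : ℕ) (u : Equiv.Perm (Fin (m + 1))) (h : n < inv u) :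
    count n u = 0 := by
  induction n generalizing u with
  | zero =>
    rw [count, if_neg]
    rintro rfl
    rw [inv_one] at h
    omega
  | succ n ih =>
    rw [count]
    refine Finset.sum_eq_zero fun i _ => ih _ ?_
    rcases lt_or_ge (u i.castSucc) (u i.succ) with h' | h'
    · rw [inv_mul_s u i h']; omega
    · have hne : u i.succ ≠ u i.castSucc := fun e => by
        have := u.injective e
        simp [Fin.ext_iff] at this
      have := inv_of_descent u i (lt_of_le_of_ne h' hne)
      omega

lemma ncard_words {m : ℕ} (n : ℕ) (u : Equiv.Perm (Fin (m + 1))) :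
    {L : List (Fin m) | L.length = n ∧ (L.map s).prod = u⁻¹}.ncard = count n u := by
  classical
  suffices H : ∃ F : Finset (List (Fin m)),
      (∀ L, L ∈ F ↔ L.length = n ∧ (L.map s).prod = u⁻¹) ∧ F.card = count n u by
    obtain ⟨F, hF, hc⟩ := H
    rw [← hc, ← Set.ncard_coe_finset]
    congr 1
    ext L
    simp [hF]
  induction n generalizing u with
  | zero =>
    refine ⟨if u = 1 then {[]} else ∅, fun L => ?_, ?_⟩
    · rw [List.length_eq_zero_iff]
      split_ifs with h
      · subst h
        simp only [Finset.mem_singleton]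
        constructor
        · rintro rfl; simp
        · exact fun h => h.1
      · simp only [Finset.notMem_empty, false_iff]
        rintro ⟨rfl, h'⟩
        exact h (by simpa using h'.symm)
    · rw [count]
      split_ifs <;> simp
  | succ n ih =>
    choose F hF hc using ih
    refine ⟨Finset.univ.biUnion fun i => (F (u * s i)).map ⟨List.cons i, List.cons_injective⟩,
      fun L => ?_, ?_⟩
    · simp only [Finset.mem_biUnion, Finset.mem_univ, true_and, Finset.mem_map,
        Function.Embedding.coeFn_mk, hF]
      have key : ∀ (i : Fin m) (x : Equiv.Perm (Fin (m + 1))),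
          x = (u * s i)⁻¹ ↔ s i * x = u⁻¹ := by
        intro i x
        rw [mul_inv_rev, eq_inv_mul_iff_mul_eq]
      constructor
      · rintro ⟨i, L, ⟨h1, h2⟩, rfl⟩
        rw [key] at h2
        simp [h1, h2]
      · rintro ⟨h1, h2⟩
        cases L with
        | nil => simp at h1
        | cons i L =>
          refine ⟨i, L, ⟨by simpa using h1, ?_⟩, rfl⟩
          rw [key]
          simpa using h2
    · rw [Finset.card_biUnion, count]
      · exact Finset.sum_congr rfl fun i _ => by rw [Finset.card_map, hc]
      · intro i _ j _ hij
        rw [Function.onFun, Finset.disjoint_left]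
        intro L hi hj
        simp only [Finset.mem_map, Function.Embedding.coeFn_mk] at hi hj
        obtain ⟨L1, _, rfl⟩ := hi
        obtain ⟨L2, _, h⟩ := hj
        exact hij (List.cons.inj h).1.symm

/-! ### The recursion over descents -/

/-- A permutation with one-line notation `f` (only the values at `v ≤ m` matter) has inversion
number `n`, and its inverse has exactly `c` reduced words.  Vacuous when `f` is the one-line
notation of no permutation. -/
def Reach (m n c : ℕ) (f : ℕ → ℕ) : Prop :=
  ∀ u : Equiv.Perm (Fin (m + 1)), (∀ v, (u v : ℕ) = f v) → inv u = n ∧ count n u = c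

/-- `g` is obtained from `f` by exchanging the entries at positions `j` and `j + 1`. -/
def SwapAt (m j : ℕ) (f g : ℕ → ℕ) : Prop :=
  ∀ v ≤ m, g v = if v = j then f (j + 1) else if v = j + 1 then f j else f v

lemma SwapAt.apply {m j : ℕ} (hj : j < m) {f g : ℕ → ℕ} (h : SwapAt m j f g)
    (u : Equiv.Perm (Fin (m + 1))) (hu : ∀ v, (u v : ℕ) = f v) (v : Fin (m + 1)) :
    ((u * s ⟨j, hj⟩) v : ℕ) = g v := by
  rw [h v (by omega), Equiv.Perm.mul_apply, hu, s, Equiv.swap_apply_def]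
  simp only [Fin.ext_iff, Fin.val_castSucc, Fin.val_succ]
  split_ifs <;> simp

lemma Reach.of_id {m : ℕ} {f : ℕ → ℕ} (h : ∀ v ≤ m, f v = v) : Reach m 0 1 f := by
  intro u hu
  have : u = 1 := by
    ext v
    rw [hu, h _ (by omega), Equiv.Perm.one_apply]
  subst this
  exact ⟨inv_one, by simp [count]⟩

/-- The recursion at a permutation whose only descent is `j`. -/
lemma Reach.step_one {m n c : ℕ} {f g : ℕ → ℕ} (hg : Reach m n c g) (j : ℕ) (hj : j < m)
    (hd : f (j + 1) < f j) (ha : ∀ i < m, i ≠ j → f i < f (i + 1)) (hs : SwapAt m j f g) :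
    Reach m (n + 1) c f := by
  intro u hu
  obtain ⟨h1, h2⟩ := hg _ (hs.apply hj u hu)
  have hinv : inv u = n + 1 := by
    rw [inv_of_descent u ⟨j, hj⟩ (by simpa [Fin.lt_def, hu] using hd), h1]
  refine ⟨hinv, ?_⟩
  rw [count, Finset.sum_eq_single ⟨j, hj⟩, h2]
  · intro i _ hi
    apply count_eq_zero
    rw [inv_mul_s u i]
    · omega
    · simpa [Fin.lt_def, hu] using ha i i.2 (by simpa [Fin.ext_iff] using hi)
  · simp

/-- The recursion at a permutation whose only descents are `j` and `l`.  That `l` is a descent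
need not be assumed: it follows from the inversion number prescribed for `h`. -/
lemma Reach.step_two {m n c d : ℕ} {f g h : ℕ → ℕ} (hg : Reach m n c g) (hh : Reach m n d h)
    (j l : ℕ) (hj : j < m) (hl : l < m) (hjl : j ≠ l)
    (hd : f (j + 1) < f j) (ha : ∀ i < m, i ≠ j → i ≠ l → f i < f (i + 1))
    (hs : SwapAt m j f g) (hs' : SwapAt m l f h) :
    Reach m (n + 1) (c + d) f := by
  intro u hu
  obtain ⟨h1, h2⟩ := hg _ (hs.apply hj u hu)
  obtain ⟨h3, h4⟩ := hh _ (hs'.apply hl u hu)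
  have hinv : inv u = n + 1 := by
    rw [inv_of_descent u ⟨j, hj⟩ (by simpa [Fin.lt_def, hu] using hd), h1]
  refine ⟨hinv, ?_⟩
  rw [count, Fintype.sum_eq_add ⟨j, hj⟩ ⟨l, hl⟩, h2, h4]
  · simpa [Fin.ext_iff] using hjl
  · rintro i ⟨hi, hi'⟩
    apply count_eq_zero
    rw [inv_mul_s u i]
    · omega
    · simpa [Fin.lt_def, hu] using
        ha i i.2 (by simpa [Fin.ext_iff] using hi) (by simpa [Fin.ext_iff] using hi')

/-! ### The one-line notations that occur -/

/-- One-line notation fixing every `v < k`, with entries `k + a, k + b, k + c, k + d` at the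
positions `k, k + 1, k + 2, k + 3`. -/
def quad (k a b c d : ℕ) (v : ℕ) : ℕ :=
  if v = k then k + a else if v = k + 1 then k + b else if v = k + 2 then k + c
  else if v = k + 3 then k + d else v

/-- One-line notation of the inverse of the cycle `s_j ⋯ s_{k+2}` of `{0, …, k + 3}`. -/
def cyc (k j v : ℕ) : ℕ := if v < j then v else if v = j then k + 3 else v - 1

/-- `cyc k j` with the entries at positions `k + 1` and `k + 2` exchanged. -/
def cycB (k j v : ℕ) : ℕ :=
  if v = k + 1 then k + 1 else if v = k + 2 then k else cyc k j v

/-- `cycB k j` with the entries at positions `k + 2` and `k + 3` exchanged. -/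
def cycD (k j v : ℕ) : ℕ :=
  if v = k + 1 then k + 1 else if v = k + 2 then k + 2 else if v = k + 3 then k else cyc k j v

lemma reach_cyc (k t : ℕ) (ht : t ≤ k + 3) : Reach (k + 3) t 1 (cyc k (k + 3 - t)) := by
  induction t with
  | zero => exact .of_id fun v hv => by unfold cyc; split_ifs <;> omega
  | succ t ih =>
    refine (ih (by omega)).step_one (k + 3 - (t + 1)) (by omega) ?_ ?_ ?_
    · unfold cyc; split_ifs <;> omega
    · intro i _ _; unfold cyc; split_ifs <;> omega
    · intro v _; unfold cyc; split_ifs <;> omega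

/-- The permutation `cycB k k` becomes this one when its descent `k` is removed. -/
lemma reach_1302 (k : ℕ) : Reach (k + 3) 3 2 (quad k 1 3 0 2) := by
  have h0 : Reach (k + 3) 0 1 (quad k 0 1 2 3) :=
    .of_id fun v _ => by unfold quad; split_ifs <;> omega
  have h1 : Reach (k + 3) 1 1 (quad k 0 1 3 2) := by
    refine h0.step_one (k + 2) (by omega) ?_ ?_ ?_
    · unfold quad; split_ifs <;> omega
    · intro i _ _; unfold quad; split_ifs <;> omega
    · intro v _; grind [quad]
  have h2 : Reach (k + 3) 1 1 (quad k 1 0 2 3) := by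
    refine h0.step_one k (by omega) ?_ ?_ ?_
    · unfold quad; split_ifs <;> omega
    · intro i _ _; unfold quad; split_ifs <;> omega
    · intro v _; grind [quad]
  have h3 : Reach (k + 3) 2 2 (quad k 1 0 3 2) := by
    refine h1.step_two h2 k (k + 2) (by omega) (by omega) (by omega) ?_ ?_ ?_ ?_
    · unfold quad; split_ifs <;> omega
    · intro i _ _ _; unfold quad; split_ifs <;> omega
    · intro v _; grind [quad]
    · intro v _; grind [quad]
  refine h3.step_one (k + 1) (by omega) ?_ ?_ ?_
  · unfold quad; split_ifs <;> omega
  · intro i _ _; unfold quad; split_ifs <;> omega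
  · intro v _; grind [quad]

/-- The permutation `cycD k k` becomes this one when its descent `k` is removed. -/
lemma reach_1320 (k : ℕ) : Reach (k + 3) 4 3 (quad k 1 3 2 0) := by
  have h0 : Reach (k + 3) 0 1 (quad k 0 1 2 3) :=
    .of_id fun v _ => by unfold quad; split_ifs <;> omega
  have h1 : Reach (k + 3) 1 1 (quad k 1 0 2 3) := by
    refine h0.step_one k (by omega) ?_ ?_ ?_
    · unfold quad; split_ifs <;> omega
    · intro i _ _; unfold quad; split_ifs <;> omega
    · intro v _; grind [quad]
  have h2 : Reach (k + 3) 2 1 (quad k 1 2 0 3) := by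
    refine h1.step_one (k + 1) (by omega) ?_ ?_ ?_
    · unfold quad; split_ifs <;> omega
    · intro i _ _; unfold quad; split_ifs <;> omega
    · intro v _; grind [quad]
  have h3 : Reach (k + 3) 3 1 (quad k 1 2 3 0) := by
    refine h2.step_one (k + 2) (by omega) ?_ ?_ ?_
    · unfold quad; split_ifs <;> omega
    · intro i _ _; unfold quad; split_ifs <;> omega
    · intro v _; grind [quad]
  refine h3.step_two (reach_1302 k) (k + 1) (k + 2) (by omega) (by omega) (by omega) ?_ ?_ ?_ ?_
  · unfold quad; split_ifs <;> omega
  · intro i _ _ _; unfold quad; split_ifs <;> omega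
  · intro v _; grind [quad]
  · intro v _; grind [quad]

lemma reach_cycB (k t : ℕ) (ht : t ≤ k) : Reach (k + 3) (t + 4) (t + 3) (cycB k (k - t)) := by
  have hc : Reach (k + 3) (t + 3) 1 (cyc k (k - t)) := by
    have := reach_cyc k (t + 3) (by omega)
    rwa [show k + 3 - (t + 3) = k - t by omega] at this
  induction t with
  | zero =>
    refine (reach_1302 k).step_two hc k (k + 1) (by omega) (by omega) (by omega) ?_ ?_ ?_ ?_
    · simp [cycB, cyc]
    · intro i _ _ _; grind [cycB, cyc]
    · intro v _; grind [cycB, cyc, quad]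
    · intro v _; grind [cycB, cyc]
  | succ t ih =>
    have hc' : Reach (k + 3) (t + 3) 1 (cyc k (k - t)) := by
      have := reach_cyc k (t + 3) (by omega)
      rwa [show k + 3 - (t + 3) = k - t by omega] at this
    refine (ih (by omega) hc').step_two hc (k - (t + 1)) (k + 1)
      (by omega) (by omega) (by omega) ?_ ?_ ?_ ?_
    · unfold cycB cyc; split_ifs <;> omega
    · intro i _ _ _; grind [cycB, cyc]
    · intro v _; grind [cycB, cyc]
    · intro v _; grind [cycB, cyc]

lemma reach_cycD (k t : ℕ) (ht : t ≤ k) :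
    Reach (k + 3) (t + 5) ((t + 4).choose 2) (cycD k (k - t)) := by
  induction t with
  | zero =>
    refine (reach_1320 k).step_two (reach_cycB k 0 ht) k (k + 2)
      (by omega) (by omega) (by omega) ?_ ?_ ?_ ?_
    · simp [cycD, cyc]
    · intro i _ _ _; grind [cycD, cyc]
    · intro v _; grind [cycD, cyc, quad]
    · intro v _; grind [cycD, cycB, cyc]
  | succ t ih =>
    rw [show (t + 1 + 4).choose 2 = (t + 4).choose 2 + (t + 1 + 3) by
      rw [show t + 1 + 4 = (t + 4) + 1 by omega, Nat.choose_succ_succ' (t + 4) 1,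
        Nat.choose_one_right, show 1 + 1 = 2 from rfl]
      omega]
    refine (ih (by omega)).step_two (reach_cycB k (t + 1) ht) (k - (t + 1)) (k + 2)
      (by omega) (by omega) (by omega) ?_ ?_ ?_ ?_
    · unfold cycD cyc; split_ifs <;> omega
    · intro i _ _ _; grind [cycD, cyc]
    · intro v _; grind [cycD, cyc]
    · intro v _; grind [cycD, cycB, cyc]

end ReducedWords

open ReducedWords in
/-- For r ≥ 4, the permutation σ = (2,3,…,r-3, r, r-2, r-1, 1) ∈ S_r (0-indexed below) has
exactly C(r,2) reduced words, i.e. sequences of adjacent transposition indices of length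
ℓ(σ) = r+1 whose product is σ. -/
theorem stmt_7 (r : ℕ) (hr : 4 ≤ r) (σ : Equiv.Perm (Fin r))
    (h1 : ∀ i : Fin r, (i : ℕ) < r - 4 → (σ i : ℕ) = (i : ℕ) + 1)
    (h2 : (σ ⟨r - 4, by omega⟩ : ℕ) = r - 1)
    (h3 : (σ ⟨r - 3, by omega⟩ : ℕ) = r - 3)
    (h4 : (σ ⟨r - 2, by omega⟩ : ℕ) = r - 2)
    (h5 : (σ ⟨r - 1, by omega⟩ : ℕ) = 0) :
    {L : List (Fin (r - 1)) | L.length = r + 1 ∧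
      (L.map fun i => Equiv.swap (Fin.castLE (by omega) i)
        ⟨(i : ℕ) + 1, by omega⟩).prod = σ}.ncard = Nat.choose r 2 := by
  obtain ⟨k, rfl⟩ : ∃ k, r = k + 4 := ⟨r - 4, by omega⟩
  have hσ : ∀ v : Fin (k + 4), (σ⁻¹ v : ℕ) = cycD k 0 v := by
    intro v
    have key : ∀ (x : ℕ) (hx : x < k + 4), (σ ⟨x, hx⟩ : ℕ) = v → (σ⁻¹ v : ℕ) = x := by
      intro x hx h
      have : σ⁻¹ v = ⟨x, hx⟩ := by
        rw [Equiv.Perm.inv_eq_iff_eq]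
        exact Fin.ext h.symm
      rw [this]
    have hv := v.2
    unfold cycD cyc
    split_ifs with a b c d e
    · exact key _ (by omega) (h3.trans (by omega))
    · exact key _ (by omega) (h4.trans (by omega))
    · exact key _ (by omega) (h2.trans (by omega))
    · omega
    · exact key _ (by omega) (h5.trans (by omega))
    · exact key _ (by omega) ((h1 ⟨v - 1, by omega⟩ (by simp only; omega)).trans
        (by simp only; omega))
  have h := (reach_cycD k k le_rfl σ⁻¹ (by simpa using hσ)).2
  rw [← ncard_words, inv_inv] at h
  exact h
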